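/- If the matching problem has a unique stable matching μ, then the normal form equals the graph of μ, that is, S* = {(w, μ(w)) : w ∈ W}. -/

import Mathlib

/-- `(w,f)` blocks the matching `μ`: `f ≻_w μ(w)` and `w ≻_f μ⁻¹(f)`.
`prefW w f f'` means worker `w` strictly prefers firm `f` to firm `f'`;
`prefF f w w'` means firm `f` strictly prefers worker `w` to worker `w'`. -/
def Blocks {W F : Type*} (prefW : W → F → F → Prop) (prefF : F → W → W → Prop)
    (μ : W ≃ F) (w : W) (f : F) : Prop :=
  prefW w f (μ w) ∧ prefF f w (μ.symm f)

/-- A matching is stable if no pair blocks it. -/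
def IsStableMatching {W F : Type*} (prefW : W → F → F → Prop)
    (prefF : F → W → W → Prop) (μ : W ≃ F) : Prop :=
  ∀ w f, ¬ Blocks prefW prefF μ w f

/-- A pair `(w,f)` is unattractive in `S`. -/
def Unattractive {W F : Type*} (prefW : W → F → F → Prop) (prefF : F → W → W → Prop)
    (S : Set (W × F)) (w : W) (f : F) : Prop :=
  (∃ f', (w, f') ∈ S ∧ prefW w f' f ∧
      ∀ w', w' ≠ w → (w', f') ∈ S → prefF f' w w') ∨
  (∃ w', (w', f) ∈ S ∧ prefF f w' w ∧
      ∀ f'', f'' ≠ f → (w', f'') ∈ S → prefW w' f f'')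

/-- `delta S` is `S` with all pairs unattractive in `S` removed. -/
def delta {W F : Type*} (prefW : W → F → F → Prop) (prefF : F → W → W → Prop)
    (S : Set (W × F)) : Set (W × F) :=
  {p ∈ S | ¬ Unattractive prefW prefF S p.1 p.2}

/-- The normal form: the fixed point of `delta` reached by iterating from `W × F`.
Since `delta S ⊆ S` and `W × F` is finite, `Fintype.card (W × F)` iterations suffice. -/
def NormalForm (W F : Type*) [Fintype W] [Fintype F]
    (prefW : W → F → F → Prop) (prefF : F → W → W → Prop) : Set (W × F) :=
  (delta prefW prefF)^[Fintype.card (W × F)] Set.univ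

/-- `μ` is `S`-stable: `S`-admissible and no pair of `S` blocks it within `S`. -/
def SStable {W F : Type*} (prefW : W → F → F → Prop) (prefF : F → W → W → Prop)
    (S : Set (W × F)) (μ : W ≃ F) : Prop :=
  (∀ w, (w, μ w) ∈ S) ∧
  ∀ w f, (w, f) ∈ S → ¬ (prefW w f (μ w) ∧ prefF f w (μ.symm f))

/-- Arcs of the matching digraph `D(S)`: from `(w,f)` to `(w,f')` whenever `f' ≻_w f`,
and from `(w,f)` to `(w',f)` whenever `w' ≻_f w`. -/
def Arc {W F : Type*} (prefW : W → F → F → Prop) (prefF : F → W → W → Prop)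
    (S : Set (W × F)) (p q : W × F) : Prop :=
  p ∈ S ∧ q ∈ S ∧
    ((p.1 = q.1 ∧ prefW p.1 q.2 p.2) ∨ (p.2 = q.2 ∧ prefF p.2 q.1 p.1))

/-- `D(S)` contains a directed cycle: distinct vertices `c 0, …, c (n-1)` with `n ≥ 1`,
`c n = c 0`, and an arc from each vertex to the next. -/
def HasDirectedCycle {W F : Type*} (prefW : W → F → F → Prop)
    (prefF : F → W → W → Prop) (S : Set (W × F)) : Prop :=
  ∃ (n : ℕ) (c : Fin (n + 1) → W × F), 0 < n ∧
    Function.Injective (fun i : Fin n => c i.castSucc) ∧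
    c (Fin.last n) = c 0 ∧
    ∀ i : Fin n, Arc prefW prefF S (c i.castSucc) (c i.succ)

/-- The preference lists possess a cycle: there are `k ≥ 2`, distinct workers
`w_1, …, w_k` and distinct firms `f_1, …, f_k` (indexed by `ZMod k`) with
`f_{j+1} ≻_{w_j} f_j` and `w_j ≻_{f_j} w_{j-1}` for all `j`, indices modulo `k`. -/
def PrefCycle {W F : Type*} (prefW : W → F → F → Prop)
    (prefF : F → W → W → Prop) : Prop :=
  ∃ k : ℕ, 2 ≤ k ∧ ∃ (ws : ZMod k → W) (fs : ZMod k → F),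
    Function.Injective ws ∧ Function.Injective fs ∧
    ∀ j : ZMod k, prefW (ws j) (fs (j + 1)) (fs j) ∧ prefF (fs j) (ws j) (ws (j - 1))

/-!
Deleting unattractive pairs does not change the stable matchings. The key case is a firm `f` whom
some worker has as top choice in `S`: among these workers, the one `f` likes best keeps the pair
with `f` in `Δ(S)`, and this pair would block any matching that gives `f` someone worse.

In a fixed point `S` of `Δ`, a worker who has `f` as top choice is the worst partner `S` leaves to
`f`. Hence distinct workers have distinct top choices, and matching each worker to its top choice is
stable; symmetrically for firms. If the stable matching is unique, both of these equal `μ`. So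
`μ⁻¹(f)` is at once the worst and the best partner `S` leaves to `f`, and `S` is the graph of `μ`.
-/

theorem isFixedPt_iterate_of_card_le {α : Type*} [Finite α] {g : Set α → Set α}
    (hg : ∀ s, g s ⊆ s) (s : Set α) {n : ℕ} (hn : Nat.card α ≤ n) :
    Function.IsFixedPt g (g^[n] s) := by
  have hsub (k : ℕ) : g^[k + 1] s ⊆ g^[k] s := by
    rw [Function.iterate_succ_apply']
    exact hg _
  have hmono : Monotone fun k => (g^[k] s)ᶜ.ncard :=
    monotone_nat_of_le_succ fun k => Set.ncard_le_ncard (Set.compl_subset_compl.2 (hsub k))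
  have hfix {k : ℕ} (h : (g^[k] s)ᶜ.ncard = (g^[k + 1] s)ᶜ.ncard) :
      Function.IsFixedPt g (g^[k] s) := by
    rw [Function.IsFixedPt, ← Function.iterate_succ_apply' g]
    exact (compl_injective
      (Set.eq_of_subset_of_ncard_le (Set.compl_subset_compl.2 (hsub k)) h.ge)).symm
  have hstab {m : ℕ} (hm : Nat.card α ≤ m) :
      (g^[m] s)ᶜ.ncard = (g^[Nat.card α] s)ᶜ.ncard :=
    Nat.stabilises_of_monotone hmono (fun _ => Set.ncard_le_card _)
      (fun k h => by simp only [Function.iterate_succ_apply', (hfix h).eq]) hm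
  exact hfix ((hstab hn).trans (hstab (hn.trans n.le_succ)).symm)

/-- `b` is the top choice of `a` among its partners in `S`: the pair `(a, b)` is in `S`, and `a`
prefers `b` to all other partners that `S` allows. A firm's top choice among workers is expressed by
`IsTopChoice prefF (Prod.swap ⁻¹' S)`. -/
def IsTopChoice {α β : Type*} (pref : α → β → β → Prop) (S : Set (α × β)) (a : α) (b : β) : Prop :=
  (a, b) ∈ S ∧ ∀ b', b' ≠ b → (a, b') ∈ S → pref a b b'

theorem exists_isTopChoice {α β : Type*} {pref : α → β → β → Prop} {S : Set (α × β)} {a : α} {b : β}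
    [IsWellOrder β (pref a)] (hab : (a, b) ∈ S) : ∃ b', IsTopChoice pref S a b' := by
  obtain ⟨m, hm, hmin⟩ := (IsWellFounded.wf (r := pref a)).has_min {b' | (a, b') ∈ S} ⟨b, hab⟩
  refine ⟨m, hm, fun b' hne hb' => ?_⟩
  exact ((trichotomous_of (pref a) b' m).resolve_left (hmin b' hb')).resolve_left hne

section

variable {W F : Type*} {prefW : W → F → F → Prop} {prefF : F → W → W → Prop}
  {S : Set (W × F)} {μ : W ≃ F} {w w' : W} {f : F}

theorem unattractive_iff : Unattractive prefW prefF S w f ↔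
    (∃ f', IsTopChoice prefF (Prod.swap ⁻¹' S) f' w ∧ prefW w f' f) ∨
      ∃ w', IsTopChoice prefW S w' f ∧ prefF f w' w :=
  or_congr (exists_congr fun _ => and_assoc.symm.trans and_right_comm)
    (exists_congr fun _ => and_assoc.symm.trans and_right_comm)

theorem delta_subset : delta prefW prefF S ⊆ S :=
  Set.sep_subset _ _

theorem delta_swap :
    delta prefF prefW (Prod.swap ⁻¹' S) = Prod.swap ⁻¹' delta prefW prefF S :=
  Set.ext fun _ => and_congr_right fun _ => not_congr Or.comm

theorem SStable.swap (h : SStable prefW prefF S μ) :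
    SStable prefF prefW (Prod.swap ⁻¹' S) μ.symm :=
  ⟨fun f => by simpa using h.1 (μ.symm f), fun f w hS hb => h.2 w f hS hb.symm⟩

theorem SStable.not_prefers_of_isTopChoice [Std.Irrefl (prefF f)] (h : SStable prefW prefF S μ)
    (htop : IsTopChoice prefW S w f) : ¬ prefF f w (μ.symm f) := by
  intro hpref
  have hne : μ w ≠ f := by
    rintro rfl
    exact irrefl_of (prefF (μ w)) w (by simpa using hpref)
  exact h.2 w f htop.1 ⟨htop.2 _ hne (h.1 w), hpref⟩

theorem SStable.to_delta [∀ w, Std.Irrefl (prefW w)] [∀ f, Std.Irrefl (prefF f)]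
    (h : SStable prefW prefF S μ) : SStable prefW prefF (delta prefW prefF S) μ := by
  refine ⟨fun w => ⟨h.1 w, ?_⟩, fun w f hmem => h.2 w f (delta_subset hmem)⟩
  rw [unattractive_iff]
  rintro (⟨f', htop, hpref⟩ | ⟨w', htop, hpref⟩)
  · exact h.swap.not_prefers_of_isTopChoice htop hpref
  · exact h.not_prefers_of_isTopChoice htop (by simpa using hpref)

theorem IsTopChoice.exists_delta [∀ w, Std.Asymm (prefW w)] [IsWellFounded W (prefF f)]
    (h : IsTopChoice prefW S w f) :
    ∃ w', IsTopChoice prefW (delta prefW prefF S) w' f ∧ ¬ prefF f w w' := by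
  obtain ⟨w', htop, hbest⟩ :=
    (IsWellFounded.wf (r := prefF f)).has_min {w | IsTopChoice prefW S w f} ⟨w, h⟩
  have hattractive : ¬ Unattractive prefW prefF S w' f := by
    rw [unattractive_iff]
    rintro (⟨f', hf', hpref⟩ | ⟨w'', hw'', hpref⟩)
    · have hne : f' ≠ f := by
        rintro rfl
        exact irrefl_of (prefW w') f' hpref
      exact asymm_of (prefW w') hpref (htop.2 f' hne hf'.1)
    · exact hbest w'' hw'' hpref
  exact ⟨w', ⟨⟨htop.1, hattractive⟩, fun f' hne hmem => htop.2 f' hne (delta_subset hmem)⟩,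
    hbest w h⟩

theorem SStable.not_prefers_of_isTopChoice_of_delta [∀ w, Std.Asymm (prefW w)]
    [IsWellOrder W (prefF f)] (h : SStable prefW prefF (delta prefW prefF S) μ)
    (htop : IsTopChoice prefW S w f) : ¬ prefF f w (μ.symm f) := by
  intro hpref
  obtain ⟨w', htop', hbest⟩ := htop.exists_delta (prefF := prefF)
  exact h.not_prefers_of_isTopChoice htop' (trans_trichotomous_left hbest hpref)

theorem SStable.of_delta [∀ w, IsWellOrder F (prefW w)] [∀ f, IsWellOrder W (prefF f)]
    (h : SStable prefW prefF (delta prefW prefF S) μ) : SStable prefW prefF S μ := by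
  refine ⟨fun w => delta_subset (h.1 w), fun w f hmem hb => ?_⟩
  by_cases hun : Unattractive prefW prefF S w f
  · rcases unattractive_iff.1 hun with ⟨f', htop, hpref⟩ | ⟨w', htop, hpref⟩
    · have hswap := h.swap
      rw [← delta_swap] at hswap
      exact hswap.not_prefers_of_isTopChoice_of_delta htop (trans_of (prefW w) hpref hb.1)
    · exact h.not_prefers_of_isTopChoice_of_delta htop (trans_of (prefF f) hpref hb.2)
  · exact h.2 w f ⟨hmem, hun⟩ hb

theorem sStable_iterate_delta_iff [∀ w, IsWellOrder F (prefW w)] [∀ f, IsWellOrder W (prefF f)]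
    (k : ℕ) : SStable prefW prefF ((delta prefW prefF)^[k] S) μ ↔ SStable prefW prefF S μ := by
  induction k with
  | zero => rfl
  | succ k ih =>
    rw [Function.iterate_succ_apply', ← ih]
    exact ⟨SStable.of_delta, SStable.to_delta⟩

theorem sStable_univ_iff : SStable prefW prefF Set.univ μ ↔ IsStableMatching prefW prefF μ := by
  simp [SStable, IsStableMatching, Blocks]

theorem sStable_normalForm_iff [Fintype W] [Fintype F] [∀ w, IsWellOrder F (prefW w)]
    [∀ f, IsWellOrder W (prefF f)] :
    SStable prefW prefF (NormalForm W F prefW prefF) μ ↔ IsStableMatching prefW prefF μ :=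
  (sStable_iterate_delta_iff _).trans sStable_univ_iff

theorem isFixedPt_delta_normalForm [Fintype W] [Fintype F] :
    Function.IsFixedPt (delta prefW prefF) (NormalForm W F prefW prefF) :=
  isFixedPt_iterate_of_card_le (fun _ => delta_subset) _ Nat.card_eq_fintype_card.le

theorem IsTopChoice.not_prefers_of_isFixedPt (hS : Function.IsFixedPt (delta prefW prefF) S)
    (htop : IsTopChoice prefW S w f) (hmem : (w', f) ∈ S) : ¬ prefF f w w' := by
  rw [← hS] at hmem
  exact fun hpref => hmem.2 (unattractive_iff.2 (.inr ⟨w, htop, hpref⟩))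

theorem IsTopChoice.eq_of_isFixedPt [Std.Trichotomous (prefF f)]
    (hS : Function.IsFixedPt (delta prefW prefF) S)
    (h : IsTopChoice prefW S w f) (h' : IsTopChoice prefW S w' f) : w = w' :=
  Std.Trichotomous.trichotomous w w' (h.not_prefers_of_isFixedPt hS h'.1)
    (h'.not_prefers_of_isFixedPt hS h.1)

theorem sStable_of_isTopChoice [∀ w, Std.Asymm (prefW w)]
    (h : ∀ w, IsTopChoice prefW S w (μ w)) : SStable prefW prefF S μ := by
  refine ⟨fun w => (h w).1, fun w f hmem hb => ?_⟩
  have hne : f ≠ μ w := by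
    rintro rfl
    exact irrefl_of (prefW w) _ hb.1
  exact asymm_of (prefW w) hb.1 ((h w).2 f hne hmem)

theorem exists_equiv_isTopChoice [Finite W] [∀ w, IsWellOrder F (prefW w)]
    [∀ f, Std.Trichotomous (prefF f)] (hS : Function.IsFixedPt (delta prefW prefF) S)
    (hμ : ∀ w, (w, μ w) ∈ S) : ∃ ν : W ≃ F, ∀ w, IsTopChoice prefW S w (ν w) := by
  choose top htop using fun w => exists_isTopChoice (pref := prefW) (hμ w)
  have hinj : Function.Injective top := fun w w' heq =>
    (htop w).eq_of_isFixedPt hS (heq ▸ htop w')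
  have hsurj : Function.Surjective top := (Finite.injective_iff_surjective_of_equiv μ).1 hinj
  exact ⟨Equiv.ofBijective top ⟨hinj, hsurj⟩, htop⟩

theorem SStable.isTopChoice_of_unique [Finite W] [∀ w, IsWellOrder F (prefW w)]
    [∀ f, Std.Trichotomous (prefF f)] (hS : Function.IsFixedPt (delta prefW prefF) S)
    (hμ : SStable prefW prefF S μ) (huniq : ∀ ν, SStable prefW prefF S ν → ν = μ) (w : W) :
    IsTopChoice prefW S w (μ w) := by
  obtain ⟨ν, hν⟩ := exists_equiv_isTopChoice hS hμ.1
  exact huniq ν (sStable_of_isTopChoice hν) ▸ hν w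

theorem eq_graph_of_unique_sStable [Finite W] [∀ w, IsWellOrder F (prefW w)]
    [∀ f, IsWellOrder W (prefF f)] (hS : Function.IsFixedPt (delta prefW prefF) S)
    (hμ : SStable prefW prefF S μ) (huniq : ∀ ν, SStable prefW prefF S ν → ν = μ) :
    S = Set.range fun w => (w, μ w) := by
  have : Finite F := .of_equiv W μ
  have hS_swap : Function.IsFixedPt (delta prefF prefW) (Prod.swap ⁻¹' S) := by
    rw [Function.IsFixedPt, delta_swap, hS]
  have huniq_swap (ν : F ≃ W) (hν : SStable prefF prefW (Prod.swap ⁻¹' S) ν) : ν = μ.symm :=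
    Equiv.symm_bijective.injective (huniq ν.symm hν.swap)
  refine Set.Subset.antisymm ?_ (Set.range_subset_iff.2 hμ.1)
  rintro ⟨w, f⟩ hmem
  have hworker : IsTopChoice prefW S (μ.symm f) f := by
    simpa using hμ.isTopChoice_of_unique hS huniq (μ.symm f)
  have hfirm : IsTopChoice prefF (Prod.swap ⁻¹' S) f (μ.symm f) :=
    hμ.swap.isTopChoice_of_unique hS_swap huniq_swap f
  have hw : w = μ.symm f := by
    by_contra hne
    exact hworker.not_prefers_of_isFixedPt hS hmem (hfirm.2 w hne hmem)
  exact ⟨w, by simp [hw]⟩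

end

/-- If the matching problem has a unique stable matching `μ`, then the normal form
equals the graph of `μ`. -/
theorem normalForm_eq_graph_of_unique {W F : Type*} [Fintype W] [Fintype F] [Nonempty W]
    (hcard : Fintype.card W = Fintype.card F)
    (prefW : W → F → F → Prop) (prefF : F → W → W → Prop)
    (hW : ∀ w, IsStrictTotalOrder F (prefW w))
    (hF : ∀ f, IsStrictTotalOrder W (prefF f))
    (μ : W ≃ F) (hμ : IsStableMatching prefW prefF μ)
    (huniq : ∀ μ' : W ≃ F, IsStableMatching prefW prefF μ' → μ' = μ) :
    NormalForm W F prefW prefF = Set.range fun w => (w, μ w) := by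
  have (w : W) : IsWellOrder F (prefW w) :=
    { hW w with wf := Finite.wellFounded_of_trans_of_irrefl _ }
  have (f : F) : IsWellOrder W (prefF f) :=
    { hF f with wf := Finite.wellFounded_of_trans_of_irrefl _ }
  exact eq_graph_of_unique_sStable isFixedPt_delta_normalForm (sStable_normalForm_iff.2 hμ)
    fun ν hν => huniq ν (sStable_normalForm_iff.1 hν)
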